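/- arXiv:1702.00914 — 2 statements merged into one kernel-verified Lean document; each statement's English description precedes it below -/
import Mathlib

section
/- Let G be a finite simple 2K2-free graph with χ(G) > max{ω(G), Δ(G) − 1}. Then either (i) Δ(G) ≤ 3, ω(G) = 2 and χ(G) = 3, or (ii) Δ(G) = 4, χ(G) = 4 and ω(G) = 3. -/
/-- A simple graph is `2K2`-free if it has no four distinct vertices `a b c d` with
`ab` and `cd` edges and none of `ac, ad, bc, bd` an edge. -/
def TwoK2Free {V : Type*} (G : SimpleGraph V) : Prop :=
  ¬ ∃ a b c d : V, a ≠ b ∧ a ≠ c ∧ a ≠ d ∧ b ≠ c ∧ b ≠ d ∧ c ≠ d ∧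
      G.Adj a b ∧ G.Adj c d ∧ ¬ G.Adj a c ∧ ¬ G.Adj a d ∧ ¬ G.Adj b c ∧ ¬ G.Adj b d

/-!
Pass to an `(m + 1)`-vertex-critical induced subgraph. If the vertices outside an `m`-clique `K` can
be matched to non-neighbors in `K`, they can reuse the colors of `K`; `2K2`-freeness, together with
a count of the edges leaving `K`, supplies Hall's condition. Hence a vertex-critical `K_{m+1}`-free
graph is even `K_m`-free as soon as `Δ ≤ m` and `m ≥ 3`, or `Δ ≤ m + 1` and `m ≥ 4`. In the second
case, removing a maximal independent set lowers `m` and `Δ` together, so it remains to `4`-color a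
`K₄`-free graph with `Δ ≤ 5`. If it contains a triangle, its vertices are classified by their
neighbors in the triangle, and suitable unions of these classes are independent. A triangle-free
graph is covered by the neighborhoods of the two ends of an edge and the remaining vertices, which
`2K2`-freeness makes independent.
-/

open Finset

section Coloring

variable {V : Type*} {G : SimpleGraph V}

theorem colorable_of_forall_isIndepSet {n : ℕ} (S : Fin n → Set V) (hS : ∀ i, G.IsIndepSet (S i))
    (hcover : ∀ v, ∃ i, v ∈ S i) : G.Colorable n := by
  choose c hc using hcover
  exact ⟨.mk c fun {v w} hvw hcvw ↦ hS (c v) (hc v) (hcvw ▸ hc w) hvw.ne hvw⟩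

theorem colorable_of_cliqueFree_of_le_one [Finite V] {n : ℕ} (hn : n ≤ 1)
    (hcf : G.CliqueFree (n + 1)) : G.Colorable n := by
  interval_cases n
  · rw [zero_add, SimpleGraph.cliqueFree_one] at hcf
    exact SimpleGraph.colorable_zero_iff.2 hcf
  · rw [SimpleGraph.cliqueFree_two] at hcf
    exact SimpleGraph.colorable_one_iff.2 hcf

theorem isIndepSet_union_iff {S T : Set V} : G.IsIndepSet (S ∪ T) ↔
    G.IsIndepSet S ∧ G.IsIndepSet T ∧ ∀ v ∈ S, ∀ w ∈ T, ¬ G.Adj v w := by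
  have : Std.Symm fun v w ↦ ¬ G.Adj v w := ⟨fun _ _ h h' ↦ h h'.symm⟩
  rw [SimpleGraph.IsIndepSet, Set.pairwise_union_of_symm]
  exact and_congr_right fun _ ↦ and_congr_right fun _ ↦
    ⟨fun h v hv w hw hvw ↦ h v hv w hw hvw.ne hvw, fun h v hv w hw _ ↦ h v hv w hw⟩

theorem cliqueFree_succ_iff_cliqueNum_le [Finite V] {n : ℕ} :
    G.CliqueFree (n + 1) ↔ G.cliqueNum ≤ n := by
  refine ⟨fun h ↦ ?_, fun h s hs ↦ ?_⟩
  · obtain ⟨s, hs⟩ := G.exists_isNClique_cliqueNum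
    by_contra! hlt
    exact h.mono hlt s hs
  · have := hs.isClique.card_le_cliqueNum
    have := hs.card_eq
    lia

theorem colorable_succ_of_induce_compl {n : ℕ} {I : Set V}
    (hI : G.IsIndepSet I) (hcol : (G.induce Iᶜ).Colorable n) : G.Colorable (n + 1) := by
  obtain ⟨C⟩ := hcol
  refine colorable_of_forall_isIndepSet (Fin.cons I fun i ↦ {v | ∃ hv, C ⟨v, hv⟩ = i})
    (Fin.cases hI ?_) fun v ↦ ?_
  · by_cases hv : v ∈ I
    · exact ⟨0, hv⟩
    · exact ⟨(C ⟨v, hv⟩).succ, hv, rfl⟩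
  · rintro i v ⟨hv, hCv⟩ w ⟨hw, hCw⟩ _ hvw
    exact C.valid (v := ⟨v, hv⟩) (w := ⟨w, hw⟩) hvw (hCv.trans hCw.symm)

theorem degree_induce_compl_lt [Fintype V] [DecidableRel G.Adj]
    {I : Set V} [DecidablePred (· ∈ I)] (hI : Maximal G.IsIndepSet I) (v : (Iᶜ : Set V)) :
    (G.induce Iᶜ).degree v < G.degree v := by
  classical
  obtain ⟨w, hw, hvw⟩ : ∃ w ∈ I, G.Adj v w := by
    by_contra! h
    refine v.2 (hI.le_of_ge (y := {v.1} ∪ I) ?_ Set.subset_union_right (.inl rfl))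
    exact isIndepSet_union_iff.2 ⟨Set.pairwise_singleton _ _, hI.prop, by simpa using h⟩
  rw [← SimpleGraph.card_neighborFinset_eq_degree, ← SimpleGraph.card_neighborFinset_eq_degree,
    ← card_map (.subtype _), SimpleGraph.map_neighborFinset_induce]
  refine card_lt_card (Finset.ssubset_iff_subset_ne.2 ⟨inter_subset_left, fun h ↦ ?_⟩)
  have hw' : w ∈ G.neighborFinset v := by simpa using hvw
  rw [← h] at hw'
  simp [hw] at hw'

end Coloring

namespace TwoK2Free

variable {V : Type*} {G : SimpleGraph V}

theorem exists_adj (hfree : TwoK2Free G) {a b c d : V} (hab : G.Adj a b) (hcd : G.Adj c d) :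
    G.Adj a c ∨ G.Adj a d ∨ G.Adj b c ∨ G.Adj b d := by
  by_contra! hn
  obtain ⟨hac, had, hbc, hbd⟩ := hn
  refine hfree ⟨a, b, c, d, hab.ne, ?_, ?_, ?_, ?_, hcd.ne, hab, hcd, hac, had, hbc, hbd⟩
  · rintro rfl; exact had hcd
  · rintro rfl; exact hac hcd.symm
  · rintro rfl; exact hbd hcd
  · rintro rfl; exact hbc hcd.symm

theorem comap {W : Type*} {H : SimpleGraph W} (hfree : TwoK2Free G) (f : H ↪g G) : TwoK2Free H := by
  rintro ⟨a, b, c, d, -, -, -, -, -, -, hab, hcd, hac, had, hbc, hbd⟩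
  have := hfree.exists_adj (f.map_adj_iff.2 hab) (f.map_adj_iff.2 hcd)
  simp only [f.map_adj_iff] at this
  tauto

theorem induce (hfree : TwoK2Free G) (s : Set V) : TwoK2Free (G.induce s) :=
  hfree.comap (SimpleGraph.Embedding.induce s)

theorem isIndepSet_setOf_not_adj (hfree : TwoK2Free G) {a b : V} (hab : G.Adj a b) :
    G.IsIndepSet {v | ¬ G.Adj a v ∧ ¬ G.Adj b v} := by
  intro c hc d hd _ hcd
  have := hfree.exists_adj hab hcd
  simp only [Set.mem_ofPred_eq] at hc hd
  tauto

theorem colorable_three_of_cliqueFree_three (hfree : TwoK2Free G) (hcf : G.CliqueFree 3) :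
    G.Colorable 3 := by
  by_cases hedge : ∃ a b, G.Adj a b
  · obtain ⟨a, b, hab⟩ := hedge
    refine colorable_of_forall_isIndepSet
      ![G.neighborSet a, G.neighborSet b, {v | ¬ G.Adj a v ∧ ¬ G.Adj b v}] ?_ fun v ↦ ?_
    · simp [Fin.forall_fin_succ, SimpleGraph.isIndepSet_neighborSet_of_triangleFree _ hcf,
        hfree.isIndepSet_setOf_not_adj hab]
    · by_cases ha : G.Adj a v
      · exact ⟨0, ha⟩
      · by_cases hb : G.Adj b v
        exacts [⟨1, hb⟩, ⟨2, ha, hb⟩]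
  · push Not at hedge
    exact (SimpleGraph.colorable_one_iff.2 (by ext; simp [hedge])).mono (by simp)

end TwoK2Free

/-- `G` is not `n`-colorable, but deleting any vertex makes it `n`-colorable; in the usual
terminology `G` is `(n + 1)`-vertex-critical. -/
def IsVertexCritical {V : Type*} (G : SimpleGraph V) (n : ℕ) : Prop :=
  ¬ G.Colorable n ∧ ∀ v, (G.induce {v}ᶜ).Colorable n

theorem exists_isVertexCritical_induce {V : Type*} [Finite V] {G : SimpleGraph V} {n : ℕ}
    (h : ¬ G.Colorable n) : ∃ s : Set V, IsVertexCritical (G.induce s) n := by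
  obtain ⟨s, hs⟩ := (Set.toFinite {s : Set V | ¬ (G.induce s).Colorable n}).exists_minimal
    ⟨Set.univ, fun hc ↦ h (hc.of_hom (G.induceUnivIso.symm.toHom))⟩
  refine ⟨s, hs.prop, fun v ↦ ?_⟩
  have hlt : s \ {v.1} ⊂ s := Set.sdiff_singleton_ssubset.2 v.2
  have hcol : (G.induce (s \ {v.1})).Colorable n := not_not.1 (hs.not_prop_of_lt hlt)
  exact hcol.of_hom ⟨fun w ↦ ⟨w.1.1, w.1.2, fun h ↦ w.2 (Subtype.ext h)⟩, fun h ↦ h⟩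

namespace IsVertexCritical

variable {V : Type*} {G : SimpleGraph V} {n : ℕ}

theorem exists_adj_color_eq (hG : IsVertexCritical G n) {v : V}
    (C : (G.induce {v}ᶜ).Coloring (Fin n)) (i : Fin n) :
    ∃ (w : V) (hw : w ≠ v), G.Adj v w ∧ C ⟨w, hw⟩ = i := by
  classical
  by_contra! hi
  refine hG.1 ⟨.mk (fun w ↦ if hw : w ≠ v then C ⟨w, hw⟩ else i) fun {a b} hab ↦ ?_⟩
  by_cases ha : a = v <;> by_cases hb : b = v
  · exact absurd (ha.trans hb.symm) hab.ne
  · subst ha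
    simpa [hb] using (hi b hb hab).symm
  · subst hb
    simpa [ha] using hi a ha hab.symm
  · simpa [ha, hb] using C.valid (v := ⟨a, ha⟩) (w := ⟨b, hb⟩) hab

theorem le_degree [Fintype V] [DecidableRel G.Adj] (hG : IsVertexCritical G n) (v : V) :
    n ≤ G.degree v := by
  obtain ⟨C⟩ := hG.2 v
  choose w hw hadj hcol using hG.exists_adj_color_eq C
  have hinj : Function.Injective w := fun i j hij ↦ by
    rw [← hcol i, ← hcol j]; congr
  simpa using Finset.card_le_card_of_injOn w (s := Finset.univ) (t := G.neighborFinset v)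
    (by simpa [Set.MapsTo] using hadj) hinj.injOn

theorem eq_of_neighborSet_subset (hG : IsVertexCritical G n) {u v : V}
    (h : G.neighborSet v ⊆ G.neighborSet u) : v = u := by
  by_contra! hne
  obtain ⟨C⟩ := hG.2 v
  let u' : ({v}ᶜ : Set V) := ⟨u, Ne.symm hne⟩
  obtain ⟨w, hw, hvw, hcol⟩ := hG.exists_adj_color_eq C (C u')
  exact C.valid (v := ⟨w, hw⟩) (w := u') (G.adj_symm (h hvw)) hcol

end IsVertexCritical

/-- The number of neighbors of `v` in `S`; here `S` is a clique or the complement of one. -/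
def degreeIn {V : Type*} (G : SimpleGraph V) [DecidableRel G.Adj] (S : Finset V) (v : V) : ℕ :=
  #{u ∈ S | G.Adj v u}

section Clique

variable {V : Type*} {G : SimpleGraph V} [DecidableRel G.Adj] {K : Finset V} {m d : ℕ}

theorem sum_degreeIn_comm (S T : Finset V) :
    ∑ v ∈ S, degreeIn G T v = ∑ v ∈ T, degreeIn G S v := by
  simpa [degreeIn, bipartiteAbove, bipartiteBelow, G.adj_comm] using
    sum_card_bipartiteAbove_eq_sum_card_bipartiteBelow (s := S) (t := T) G.Adj

theorem degreeIn_eq_of_isNClique (hK : G.IsNClique m K) {x : V} (hx : x ∈ K) :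
    degreeIn G K x + 1 = m := by
  classical
  have : ({u ∈ K | G.Adj x u}) = K.erase x := by
    ext u
    simp only [mem_filter, mem_erase]
    exact ⟨fun h ↦ ⟨h.2.ne', h.1⟩, fun h ↦ ⟨h.2, hK.isClique hx h.2 h.1.symm⟩⟩
  rw [degreeIn, this, card_erase_add_one hx, hK.card_eq]

/-- By `2K2`-freeness, at most one vertex of a clique is missed by both ends of an edge. -/
theorem TwoK2Free.card_add_card_le (hfree : TwoK2Free G) (hK : G.IsClique K) {a b : V}
    (hab : G.Adj a b) :
    #K + #{u ∈ K | G.Adj a u ∧ G.Adj b u} ≤ degreeIn G K a + degreeIn G K b + 1 := by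
  classical
  have hmiss : #{u ∈ K | ¬ (G.Adj a u ∨ G.Adj b u)} ≤ 1 := card_le_one.2 fun x hx y hy ↦ by
    simp only [mem_filter, not_or] at hx hy
    by_contra! hxy
    have := hfree.exists_adj hab (hK hx.1 hy.1 hxy)
    tauto
  have hunion := card_union_add_card_inter {u ∈ K | G.Adj a u} {u ∈ K | G.Adj b u}
  have hsplit := card_filter_add_card_filter_not (s := K) fun u ↦ G.Adj a u ∨ G.Adj b u
  rw [← filter_or, ← filter_and] at hunion
  simp only [degreeIn]
  lia

theorem TwoK2Free.not_adj_of_degreeIn_add_lt (hfree : TwoK2Free G) (hK : G.IsClique K) {a b x : V}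
    (hab : G.Adj a b) (hlt : degreeIn G K a + degreeIn G K b < #K) (hx : x ∈ K)
    (hax : G.Adj a x) : ¬ G.Adj b x := fun hbx ↦ by
  have hmeet : 0 < #{u ∈ K | G.Adj a u ∧ G.Adj b u} := card_pos.2 ⟨x, mem_filter.2 ⟨hx, hax, hbx⟩⟩
  have := hfree.card_add_card_le hK hab
  lia

theorem degreeIn_lt_of_cliqueFree (hK : G.IsNClique m K) (hcf : G.CliqueFree (m + 1)) (v : V) :
    degreeIn G K v < m := by
  obtain ⟨x, hx, hvx⟩ := hK.exists_not_adj_of_cliqueFree_succ hcf v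
  rw [← hK.card_eq]
  exact card_lt_card (filter_ssubset.2 ⟨x, hx, hvx⟩)

variable [Fintype V]

theorem degreeIn_add_degreeIn_compl [DecidableEq V] (S : Finset V) (v : V) :
    degreeIn G S v + degreeIn G Sᶜ v = G.degree v := by
  rw [degreeIn, degreeIn, ← card_union_of_disjoint
    (disjoint_filter_filter disjoint_compl_right), ← filter_union, union_compl,
    ← SimpleGraph.neighborFinset_eq_filter, SimpleGraph.card_neighborFinset_eq_degree]

theorem degreeIn_compl_le_of_isNClique [DecidableEq V] (hK : G.IsNClique m K)
    (hΔ : G.maxDegree + 1 ≤ m + d) {x : V} (hx : x ∈ K) : degreeIn G Kᶜ x ≤ d := by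
  have := degreeIn_add_degreeIn_compl (G := G) K x
  have := degreeIn_eq_of_isNClique hK hx
  have := G.degree_le_maxDegree x
  lia

theorem sum_degreeIn_compl_le [DecidableEq V] (hK : G.IsNClique m K)
    (hΔ : G.maxDegree + 1 ≤ m + d) : ∑ v ∈ Kᶜ, degreeIn G K v ≤ d * m := by
  rw [sum_degreeIn_comm, mul_comm, ← hK.card_eq, ← smul_eq_mul]
  exact sum_le_card_nsmul K _ d fun x hx ↦ degreeIn_compl_le_of_isNClique hK hΔ hx

theorem TwoK2Free.degreeIn_pos (hfree : TwoK2Free G) (hK : G.IsNClique m K)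
    (hΔ : G.maxDegree + 1 ≤ m + d) (hd : d + 2 ≤ m) (hδ : ∀ v, m ≤ G.degree v) (v : V) :
    0 < degreeIn G K v := by
  classical
  by_contra! h0
  have hv := degreeIn_add_degreeIn_compl (G := G) K v
  have hN : m ≤ #{u ∈ Kᶜ | G.Adj v u} := by
    have := hδ v
    simp only [degreeIn] at hv h0 ⊢
    lia
  have hbig : ∀ u ∈ ({u ∈ Kᶜ | G.Adj v u} : Finset V), m - 1 ≤ degreeIn G K u := fun u hu ↦ by
    have := hfree.card_add_card_le hK.isClique (mem_filter.1 hu).2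
    rw [hK.card_eq] at this
    lia
  have hsum := (card_nsmul_le_sum _ _ _ hbig).trans <|
    (sum_le_sum_of_subset (filter_subset _ _)).trans (sum_degreeIn_compl_le hK hΔ)
  have : m * (m - 1) ≤ d * m := (Nat.mul_le_mul_right _ hN).trans hsum
  have : m - 1 ≤ d := Nat.le_of_mul_le_mul_left (by linarith) (by lia : 0 < m)
  lia

theorem exists_not_adj_of_lt_card [DecidableEq V] (hK : G.IsNClique m K)
    (hΔ : G.maxDegree + 1 ≤ m + d) {S : Finset V} (hS : S ⊆ Kᶜ) (hcard : d < #S) {x : V}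
    (hx : x ∈ K) : ∃ v ∈ S, ¬ G.Adj v x := by
  by_contra! h
  refine hcard.not_ge <| (card_le_card fun v hv ↦ ?_).trans
    (degreeIn_compl_le_of_isNClique hK hΔ hx)
  exact mem_filter.2 ⟨hS hv, (h v hv).symm⟩

/-- Hall's theorem matches the vertices outside `K` to non-neighbors in `K`, whose colors they
share. -/
theorem colorable_card_of_hall [DecidableEq V]
    (hall : ∀ s ⊆ Kᶜ, #s ≤ #{x ∈ K | ∃ v ∈ s, ¬ G.Adj v x}) : G.Colorable #K := by
  obtain ⟨f, hinj, hf⟩ := (all_card_le_biUnion_card_iff_exists_injective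
    fun v : (Kᶜ : Finset V) ↦ {x ∈ K | ¬ G.Adj v x}).1 fun s ↦ by
      have := hall (s.map (.subtype _)) fun v hv ↦ by
        obtain ⟨v, -, rfl⟩ := mem_map.1 hv
        exact v.2
      rw [card_map] at this
      refine this.trans (card_le_card fun x hx ↦ ?_)
      obtain ⟨hxK, v, hv, hvx⟩ := mem_filter.1 hx
      obtain ⟨v, hvs, rfl⟩ := mem_map.1 hv
      exact mem_biUnion.2 ⟨v, hvs, mem_filter.2 ⟨hxK, hvx⟩⟩
  simp only [mem_filter] at hf
  let c : V → V := fun v ↦ if hv : v ∈ K then v else f ⟨v, mem_compl.2 hv⟩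
  have hc_mem : ∀ v, c v ∈ K := fun v ↦ by
    by_cases hv : v ∈ K
    · simp [c, hv]
    · simpa [c, hv] using (hf ⟨v, mem_compl.2 hv⟩).1
  have hc_valid : ∀ {v w}, G.Adj v w → c v ≠ c w := fun {v w} hvw hcvw ↦ by
    simp only [c] at hcvw
    split_ifs at hcvw with hv hw hw
    · exact hvw.ne hcvw
    · exact (hf ⟨w, mem_compl.2 hw⟩).2 (hcvw ▸ hvw.symm)
    · exact (hf ⟨v, mem_compl.2 hv⟩).2 (hcvw ▸ hvw)
    · exact hvw.ne (Subtype.ext_iff.1 (hinj hcvw))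
  have hcol := (SimpleGraph.Coloring.mk (fun v ↦ (⟨c v, hc_mem v⟩ : K))
    fun hvw h ↦ hc_valid hvw (Subtype.ext_iff.1 h)).colorable
  rwa [Fintype.card_coe] at hcol

theorem colorable_of_card_compl_le [DecidableEq V] (hK : G.IsNClique m K)
    (hcf : G.CliqueFree (m + 1)) (hΔ : G.maxDegree + 1 ≤ m + d) (hcard : #Kᶜ ≤ m)
    (hall : ∀ s ⊆ Kᶜ, 1 < #s → #s ≤ d → #s ≤ #{x ∈ K | ∃ v ∈ s, ¬ G.Adj v x}) :
    G.Colorable m := by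
  refine hK.card_eq ▸ colorable_card_of_hall fun s hs ↦ ?_
  rcases lt_or_ge d #s with hds | hsd
  · rw [filter_true_of_mem fun x hx ↦ exists_not_adj_of_lt_card hK hΔ hs hds hx, hK.card_eq]
    exact (card_le_card hs).trans hcard
  rcases lt_or_ge 1 #s with h1s | hs1
  · exact hall s hs h1s hsd
  rcases s.eq_empty_or_nonempty with rfl | ⟨v, hv⟩
  · simp
  obtain ⟨x, hx, hvx⟩ := hK.exists_not_adj_of_cliqueFree_succ hcf v
  exact hs1.trans (card_pos.2 ⟨x, mem_filter.2 ⟨hx, v, hv, hvx⟩⟩)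

/-- With at most one neighbor outside `K` per vertex of `K`, Hall's condition is automatic. -/
theorem IsVertexCritical.cliqueFree_of_maxDegree_le (hG : IsVertexCritical G m)
    (hfree : TwoK2Free G) (hm : 3 ≤ m) (hcf : G.CliqueFree (m + 1)) (hΔ : G.maxDegree ≤ m) :
    G.CliqueFree m := by
  classical
  intro K hK
  have hΔ' : G.maxDegree + 1 ≤ m + 1 := by lia
  have hpos := hfree.degreeIn_pos hK hΔ' (by lia) hG.le_degree
  have hsum := (card_nsmul_le_sum Kᶜ _ 1 fun v _ ↦ hpos v).trans (sum_degreeIn_compl_le hK hΔ')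
  exact hG.1 <| colorable_of_card_compl_le hK hcf hΔ' (by simpa using hsum)
    fun s _ h1 h2 ↦ absurd h1 h2.not_gt

theorem degreeIn_le_one_of_forall_ne_adj (hK : G.IsNClique m K) (hΔ : G.maxDegree ≤ m + 1)
    {a b w u : V} (ha : a ∉ K) (hb : b ∉ K) (hw : w ∉ K) (hab : a ≠ b) (hwa : w ≠ a) (hwb : w ≠ b)
    (hau : ∀ x ∈ K, x ≠ u → G.Adj a x) (hbu : ∀ x ∈ K, x ≠ u → G.Adj b x) :
    degreeIn G K w ≤ 1 := by
  classical
  refine (card_le_card fun x hx ↦ mem_singleton.2 ?_).trans (card_singleton u).le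
  by_contra! hxu
  obtain ⟨hxK, hwx⟩ := mem_filter.1 hx
  obtain ⟨v, hv, hvx⟩ := exists_not_adj_of_lt_card hK (d := 2) (S := {a, b, w}) (by lia)
    (by simp [insert_subset_iff, ha, hb, hw])
    (by rw [card_eq_three.2 ⟨a, b, w, hab, hwa.symm, hwb.symm, rfl⟩]; simp) hxK
  simp only [mem_insert, mem_singleton] at hv
  rcases hv with rfl | rfl | rfl
  exacts [hvx (hau x hxK hxu), hvx (hbu x hxK hxu), hvx hwx]

theorem TwoK2Free.exists_ne_not_adj_or_not_adj (hfree : TwoK2Free G) (hK : G.IsNClique m K)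
    (hcf : G.CliqueFree (m + 1)) (hΔ : G.maxDegree ≤ m + 1) (hm : 4 ≤ m)
    (hδ : ∀ v, m ≤ G.degree v) {a b u : V} (ha : a ∉ K) (hb : b ∉ K) (hab : a ≠ b) (hu : u ∈ K) :
    ∃ x ∈ K, x ≠ u ∧ (¬ G.Adj a x ∨ ¬ G.Adj b x) := by
  classical
  by_contra! h
  have hau : ∀ x ∈ K, x ≠ u → G.Adj a x := fun x hx hxu ↦ (h x hx hxu).1
  have hbu : ∀ x ∈ K, x ≠ u → G.Adj b x := fun x hx hxu ↦ (h x hx hxu).2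
  have hsmall : ∀ w ∉ K, w ≠ a → w ≠ b → degreeIn G K w ≤ 1 := fun w hw hwa hwb ↦
    degreeIn_le_one_of_forall_ne_adj hK hΔ ha hb hw hab hwa hwb hau hbu
  have hnadj : ¬ G.Adj a b := fun hadj ↦ by
    have hK' := hK.insert_erase (a := a) (b := u) (by simpa using hau) hu
    obtain ⟨x, hx, hbx⟩ := hK'.exists_not_adj_of_cliqueFree_succ hcf b
    rcases mem_insert.1 hx with rfl | hx
    exacts [hbx hadj.symm, hbx (hbu x (mem_of_mem_erase hx) (ne_of_mem_erase hx))]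
  obtain ⟨w, hw⟩ : ({w ∈ Kᶜ | G.Adj a w} : Finset V).Nonempty := by
    have := degreeIn_add_degreeIn_compl (G := G) K a
    have := degreeIn_lt_of_cliqueFree hK hcf a
    have := hδ a
    exact card_pos.1 (by rw [← degreeIn]; lia)
  rw [mem_filter, mem_compl] at hw
  have hw1 := hsmall w hw.1 hw.2.ne' fun h ↦ hnadj (h ▸ hw.2)
  obtain ⟨e, he, heab⟩ : ∃ e ∈ ({e ∈ Kᶜ | G.Adj w e} : Finset V), e ∉ ({a, b} : Finset V) := by
    have := degreeIn_add_degreeIn_compl (G := G) K w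
    have := hδ w
    refine exists_mem_notMem_of_card_lt_card (card_le_two.trans_lt ?_)
    rw [← degreeIn]
    lia
  rw [mem_filter, mem_compl] at he
  simp only [mem_insert, mem_singleton, not_or] at heab
  have he1 := hsmall e he.1 heab.1 heab.2
  have := hfree.card_add_card_le hK.isClique he.2
  have := hK.card_eq
  lia

theorem TwoK2Free.one_lt_card_filter_not_adj (hfree : TwoK2Free G) (hK : G.IsNClique m K)
    (hcf : G.CliqueFree (m + 1)) (hΔ : G.maxDegree ≤ m + 1) (hm : 4 ≤ m)
    (hδ : ∀ v, m ≤ G.degree v) {s : Finset V} (hs : ∀ v ∈ s, v ∉ K) (hcard : 1 < #s) :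
    1 < #{x ∈ K | ∃ v ∈ s, ¬ G.Adj v x} := by
  obtain ⟨a, ha, b, hb, hab⟩ := one_lt_card.1 hcard
  obtain ⟨u, hu, hau⟩ := hK.exists_not_adj_of_cliqueFree_succ hcf a
  obtain ⟨x, hx, hxu, hor⟩ :=
    hfree.exists_ne_not_adj_or_not_adj hK hcf hΔ hm hδ (hs a ha) (hs b hb) hab hu
  refine one_lt_card.2 ⟨x, mem_filter.2 ⟨hx, ?_⟩, u, mem_filter.2 ⟨hu, a, ha, hau⟩, hxu⟩
  exact hor.elim (⟨a, ha, ·⟩) (⟨b, hb, ·⟩)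

/-- The neighbors of `a` outside `K` have at least `m - 2` neighbors in `K`, and there are at least
`m - 1` of them; against the at most `2 * m` edges leaving `K`, every bound is tight. -/
theorem TwoK2Free.tight_of_degreeIn_eq_one [DecidableEq V] (hfree : TwoK2Free G)
    (hK : G.IsNClique m K) (hΔ : G.maxDegree ≤ m + 1) (hm : 4 ≤ m) (hδ : ∀ v, m ≤ G.degree v)
    (hcard : m < #Kᶜ) {a : V} (ha1 : degreeIn G K a = 1) :
    m = 4 ∧ #Kᶜ = 5 ∧ degreeIn G Kᶜ a = 3 ∧
      ∀ v ∈ Kᶜ, degreeIn G K v = if G.Adj a v then 2 else 1 := by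
  have hΔ' : G.maxDegree + 1 ≤ m + 2 := by lia
  have hle : ∀ v ∈ Kᶜ, (if G.Adj a v then m - 2 else 1) ≤ degreeIn G K v := fun v _ ↦ by
    split_ifs with hav
    · have := hfree.card_add_card_le hK.isClique hav
      rw [hK.card_eq] at this
      lia
    · exact hfree.degreeIn_pos hK hΔ' (by lia) hδ v
  have hsum : ∑ v ∈ Kᶜ, (if G.Adj a v then m - 2 else 1) + degreeIn G Kᶜ a =
      (m - 2) * degreeIn G Kᶜ a + #Kᶜ := by
    have := card_filter_add_card_filter_not (s := Kᶜ) (G.Adj a)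
    rw [sum_ite, sum_const, sum_const, smul_eq_mul, smul_eq_mul, degreeIn]
    lia
  have hub := sum_degreeIn_compl_le hK hΔ'
  have hdeg : m ≤ 1 + degreeIn G Kᶜ a := by
    have := degreeIn_add_degreeIn_compl (G := G) K a
    have := hδ a
    lia
  have hm4 : m = 4 := by
    by_contra hne
    have := sum_le_sum hle
    have : 3 * degreeIn G Kᶜ a ≤ (m - 2) * degreeIn G Kᶜ a := Nat.mul_le_mul_right _ (by lia)
    lia
  subst hm4
  have := sum_le_sum hle
  have heq := (sum_eq_sum_iff_of_le hle).1 (by lia)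
  exact ⟨rfl, by lia, by lia, fun v hv ↦ (heq v hv).symm⟩

theorem TwoK2Free.adj_of_degreeIn_eq_one [DecidableEq V] (hfree : TwoK2Free G)
    (hK : G.IsNClique 4 K) (hΔ : G.maxDegree ≤ 5) {a a' : V} (ha : degreeIn G K a = 1)
    (ha' : degreeIn G K a' = 1) (h3 : 3 ≤ degreeIn G Kᶜ a)
    (hcommon : ∀ v ∈ Kᶜ, G.Adj a v → G.Adj a' v ∧ degreeIn G K v = 2) {x : V} (hx : x ∈ K)
    (hax : G.Adj a x) : G.Adj a' x := by
  by_contra hax'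
  obtain ⟨y, hy⟩ : ({u ∈ K | G.Adj a' u} : Finset V).Nonempty :=
    card_pos.1 (by rw [← degreeIn, ha']; simp)
  obtain ⟨hyK, hay'⟩ := mem_filter.1 hy
  have hy' : y ∈ K.erase x := mem_erase.2 ⟨fun h ↦ hax' (h ▸ hay'), hyK⟩
  have hcard : #((K.erase x).erase y) = 2 := by
    rw [card_erase_of_mem hy', card_erase_of_mem hx, hK.card_eq]
  have hnbr : ∀ b ∈ Kᶜ, G.Adj a b → {u ∈ K | G.Adj b u} = (K.erase x).erase y := fun b hb hab ↦ by
    obtain ⟨hab', hb2⟩ := hcommon b hb hab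
    have hlt : degreeIn G K a + degreeIn G K b < #K := by rw [ha, hb2, hK.card_eq]; simp
    have hlt' : degreeIn G K a' + degreeIn G K b < #K := by rw [ha', hb2, hK.card_eq]; simp
    have hbx := hfree.not_adj_of_degreeIn_add_lt hK.isClique hab hlt hx hax
    have hby := hfree.not_adj_of_degreeIn_add_lt hK.isClique hab' hlt' hyK hay'
    refine eq_of_subset_of_card_le (fun u hu ↦ ?_) (by rw [← degreeIn, hb2, hcard])
    obtain ⟨huK, hbu⟩ := mem_filter.1 hu
    exact mem_erase.2 ⟨fun h ↦ hby (h ▸ hbu), mem_erase.2 ⟨fun h ↦ hbx (h ▸ hbu), huK⟩⟩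
  obtain ⟨z, hz⟩ : ((K.erase x).erase y).Nonempty := card_pos.1 (by simp [hcard])
  have hsub : ({b ∈ Kᶜ | G.Adj a b} : Finset V) ⊆ {b ∈ Kᶜ | G.Adj z b} := fun b hb ↦ by
    obtain ⟨hbK, hab⟩ := mem_filter.1 hb
    rw [← hnbr b hbK hab] at hz
    exact mem_filter.2 ⟨hbK, (mem_filter.1 hz).2.symm⟩
  have := degreeIn_compl_le_of_isNClique (d := 2) hK (by lia)
    (mem_of_mem_erase (mem_of_mem_erase hz))
  exact absurd (h3.trans ((card_le_card hsub).trans this)) (by simp)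

theorem IsVertexCritical.degreeIn_ne_one [DecidableEq V] (hG : IsVertexCritical G m)
    (hfree : TwoK2Free G) (hK : G.IsNClique m K) (hΔ : G.maxDegree ≤ m + 1) (hm : 4 ≤ m)
    (hcard : m < #Kᶜ) (a : V) : degreeIn G K a ≠ 1 := by
  intro ha1
  obtain ⟨rfl, hcard5, ha3, htight⟩ :=
    hfree.tight_of_degreeIn_eq_one hK hΔ hm hG.le_degree hcard ha1
  obtain ⟨a', ha', hne⟩ : ∃ a' ∈ ({v ∈ Kᶜ | ¬ G.Adj a v} : Finset V), a' ≠ a := by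
    have := card_filter_add_card_filter_not (s := Kᶜ) (G.Adj a)
    refine exists_mem_ne ?_ a
    rw [degreeIn] at ha3
    lia
  rw [mem_filter] at ha'
  have ha1' : degreeIn G K a' = 1 := by rw [htight a' ha'.1, if_neg ha'.2]
  have htight' := (hfree.tight_of_degreeIn_eq_one hK hΔ hm hG.le_degree hcard ha1').2.2.2
  have hiff : ∀ v ∈ Kᶜ, G.Adj a v ↔ G.Adj a' v := fun v hv ↦ by
    have := (htight v hv).symm.trans (htight' v hv)
    split_ifs at this <;> simp_all
  refine hne.symm (hG.eq_of_neighborSet_subset fun v hv ↦ ?_)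
  rw [SimpleGraph.mem_neighborSet] at hv ⊢
  by_cases hvK : v ∈ K
  · exact hfree.adj_of_degreeIn_eq_one hK hΔ ha1 ha1' ha3.ge
      (fun w hw haw ↦ ⟨(hiff w hw).1 haw, by rw [htight w hw, if_pos haw]⟩) hvK hv
  · exact (hiff v (mem_compl.2 hvK)).1 hv

theorem IsVertexCritical.cliqueFree_of_maxDegree_le_succ (hG : IsVertexCritical G m)
    (hfree : TwoK2Free G) (hm : 4 ≤ m) (hcf : G.CliqueFree (m + 1)) (hΔ : G.maxDegree ≤ m + 1) :
    G.CliqueFree m := by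
  classical
  intro K hK
  have hΔ' : G.maxDegree + 1 ≤ m + 2 := by lia
  rcases le_or_gt #Kᶜ m with hcard | hcard
  · exact hG.1 <| colorable_of_card_compl_le hK hcf hΔ' hcard fun s hs h1 h2 ↦
      h2.trans <| hfree.one_lt_card_filter_not_adj hK hcf hΔ hm hG.le_degree
        (fun v hv ↦ mem_compl.1 (hs hv)) h1
  · have h2 : ∀ a ∈ Kᶜ, 2 ≤ degreeIn G K a := fun a _ ↦ by
      have := hfree.degreeIn_pos hK hΔ' (by lia) hG.le_degree a
      have := hG.degreeIn_ne_one hfree hK hΔ hm hcard a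
      lia
    have := (card_nsmul_le_sum Kᶜ _ 2 h2).trans (sum_degreeIn_compl_le hK hΔ')
    rw [smul_eq_mul] at this
    lia

end Clique

/-- The vertices adjacent to every vertex of the family `t` other than `t i`, and not to `t i`.
When `t` is a triangle, this includes `t i` itself; in a `K₄`-free graph these sets, `adjOnly G t i`
and `adjNone G t` then cover all vertices. -/
def adjAllBut {V ι : Type*} (G : SimpleGraph V) (t : ι → V) (i : ι) : Set V :=
  {v | ∀ j, G.Adj v (t j) ↔ j ≠ i}

/-- The vertices adjacent to `t i` and to no other vertex of the family `t`. -/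
def adjOnly {V ι : Type*} (G : SimpleGraph V) (t : ι → V) (i : ι) : Set V :=
  {v | ∀ j, G.Adj v (t j) ↔ j = i}

/-- The vertices adjacent to no vertex of the family `t`. -/
def adjNone {V ι : Type*} (G : SimpleGraph V) (t : ι → V) : Set V :=
  {v | ∀ j, ¬ G.Adj v (t j)}

section Triangle

variable {V : Type*} {G : SimpleGraph V} {t : Fin 3 → V} {i j k l : Fin 3}

theorem exists_ne_ne_of_fin_three (i : Fin 3) : ∃ j k, j ≠ i ∧ k ≠ i ∧ j ≠ k := by
  decide +revert

theorem exists_third_of_ne (hij : i ≠ j) : ∃ k, k ≠ i ∧ k ≠ j ∧ ∀ a, a = i ∨ a = j ∨ a = k := by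
  decide +revert

theorem mem_adjAllBut_or_adjOnly_or_adjNone (hcf : G.CliqueFree 4)
    (ht : Pairwise fun i j ↦ G.Adj (t i) (t j)) (v : V) :
    (∃ i, v ∈ adjAllBut G t i) ∨ (∃ i, v ∈ adjOnly G t i) ∨ v ∈ adjNone G t := by
  classical
  have hK : G.IsNClique 3 {t 0, t 1, t 2} := SimpleGraph.is3Clique_triple_iff.2
    ⟨ht (by simp), ht (by simp), ht (by simp)⟩
  obtain ⟨i, hi⟩ : ∃ i, ¬ G.Adj v (t i) := by
    obtain ⟨x, hx, hvx⟩ := hK.exists_not_adj_of_cliqueFree_succ hcf v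
    simp only [mem_insert, mem_singleton] at hx
    rcases hx with rfl | rfl | rfl
    exacts [⟨_, hvx⟩, ⟨_, hvx⟩, ⟨_, hvx⟩]
  obtain ⟨j, k, hji, hki, hjk⟩ := exists_ne_ne_of_fin_three i
  have hcover : ∀ a, a = i ∨ a = j ∨ a = k := by lia
  by_cases hj : G.Adj v (t j) <;> by_cases hk : G.Adj v (t k)
  · exact .inl ⟨i, fun a ↦ by rcases hcover a with rfl | rfl | rfl <;> simp [*]⟩
  · exact .inr (.inl ⟨j, fun a ↦ by rcases hcover a with rfl | rfl | rfl <;> simp [*, Ne.symm]⟩)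
  · exact .inr (.inl ⟨k, fun a ↦ by rcases hcover a with rfl | rfl | rfl <;> simp [*, Ne.symm]⟩)
  · exact .inr (.inr fun a ↦ by rcases hcover a with rfl | rfl | rfl <;> simp [*])

theorem isIndepSet_adjAllBut (hcf : G.CliqueFree 4) (ht : Pairwise fun i j ↦ G.Adj (t i) (t j))
    (i : Fin 3) : G.IsIndepSet (adjAllBut G t i) := by
  classical
  intro v hv w hw _ hvw
  obtain ⟨j, k, hj, hk, hjk⟩ := exists_ne_ne_of_fin_three i
  have hK : G.IsNClique 3 {t j, t k, w} := SimpleGraph.is3Clique_triple_iff.2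
    ⟨ht hjk, ((hw j).2 hj).symm, ((hw k).2 hk).symm⟩
  obtain ⟨x, hx, hvx⟩ := hK.exists_not_adj_of_cliqueFree_succ hcf v
  simp only [mem_insert, mem_singleton] at hx
  rcases hx with rfl | rfl | rfl
  exacts [hvx ((hv j).2 hj), hvx ((hv k).2 hk), hvx hvw]

theorem TwoK2Free.isIndepSet_adjOnly_union_adjNone (hfree : TwoK2Free G)
    (ht : Pairwise fun i j ↦ G.Adj (t i) (t j)) (i : Fin 3) :
    G.IsIndepSet (adjOnly G t i ∪ adjNone G t) := by
  obtain ⟨j, k, hj, hk, hjk⟩ := exists_ne_ne_of_fin_three i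
  refine (hfree.isIndepSet_setOf_not_adj (ht hjk)).mono fun v hv ↦ ?_
  rcases hv with hv | hv
  · exact ⟨fun h ↦ hj ((hv j).1 h.symm), fun h ↦ hk ((hv k).1 h.symm)⟩
  · exact ⟨fun h ↦ hv j h.symm, fun h ↦ hv k h.symm⟩

theorem TwoK2Free.isIndepSet_insert_adjOnly_union_adjNone (hfree : TwoK2Free G)
    (ht : Pairwise fun i j ↦ G.Adj (t i) (t j)) (hij : i ≠ j) :
    G.IsIndepSet (insert (t j) (adjOnly G t i ∪ adjNone G t)) := by
  rw [Set.insert_eq, isIndepSet_union_iff]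
  refine ⟨Set.pairwise_singleton _ _, hfree.isIndepSet_adjOnly_union_adjNone ht i, ?_⟩
  rintro _ rfl v (hv | hv) h
  exacts [hij ((hv j).1 h.symm).symm, hv j h.symm]

theorem TwoK2Free.colorable_four_of_isIndepSet_adjOnly_union (hfree : TwoK2Free G)
    (hcf : G.CliqueFree 4) (ht : Pairwise fun i j ↦ G.Adj (t i) (t j)) (hik : i ≠ k) (hjl : j ≠ l)
    (hij : G.IsIndepSet (adjOnly G t i ∪ adjAllBut G t j))
    (hkl : G.IsIndepSet (adjOnly G t k ∪ adjAllBut G t l)) : G.Colorable 4 := by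
  obtain ⟨p, -, -, hp⟩ := exists_third_of_ne hik
  obtain ⟨q, -, -, hq⟩ := exists_third_of_ne hjl
  refine colorable_of_forall_isIndepSet ![adjOnly G t i ∪ adjAllBut G t j,
    adjOnly G t k ∪ adjAllBut G t l, adjAllBut G t q, adjOnly G t p ∪ adjNone G t] ?_ fun v ↦ ?_
  · simp [Fin.forall_fin_succ, hij, hkl, isIndepSet_adjAllBut hcf ht,
      hfree.isIndepSet_adjOnly_union_adjNone ht]
  · simp only [Fin.exists_fin_succ]
    rcases mem_adjAllBut_or_adjOnly_or_adjNone hcf ht v with ⟨a, ha⟩ | ⟨a, ha⟩ | hv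
    · rcases hq a with rfl | rfl | rfl <;> simp [ha]
    · rcases hp a with rfl | rfl | rfl <;> simp [ha]
    · simp [hv]

theorem TwoK2Free.colorable_four_of_isIndepSet_pair (hfree : TwoK2Free G)
    (hcf : G.CliqueFree 4) (ht : Pairwise fun i j ↦ G.Adj (t i) (t j)) (hij : i ≠ j) (hik : i ≠ k)
    (hjk : j ≠ k)
    (hind : G.IsIndepSet (adjAllBut G t j \ {t j} ∪ adjAllBut G t k \ {t k}))
    (hki : G.IsIndepSet (adjOnly G t k ∪ adjAllBut G t i)) : G.Colorable 4 := by
  have hcover : ∀ a, a = i ∨ a = j ∨ a = k := by lia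
  refine colorable_of_forall_isIndepSet
    ![adjAllBut G t j \ {t j} ∪ adjAllBut G t k \ {t k}, adjOnly G t k ∪ adjAllBut G t i,
      insert (t j) (adjOnly G t i ∪ adjNone G t), insert (t k) (adjOnly G t j ∪ adjNone G t)]
    ?_ fun v ↦ ?_
  · simp [Fin.forall_fin_succ, hind, hki, hfree.isIndepSet_insert_adjOnly_union_adjNone ht hij,
      hfree.isIndepSet_insert_adjOnly_union_adjNone ht hjk]
  · simp only [Fin.exists_fin_succ]
    rcases mem_adjAllBut_or_adjOnly_or_adjNone hcf ht v with ⟨a, ha⟩ | ⟨a, ha⟩ | hv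
    · rcases hcover a with rfl | rfl | rfl
      · simp [ha]
      · by_cases hva : v = t a <;> simp [ha, hva]
      · by_cases hva : v = t a <;> simp [ha, hva]
    · rcases hcover a with rfl | rfl | rfl <;> simp [ha]
    · simp [hv]

theorem TwoK2Free.colorable_four_of_forall_isIndepSet_pair (hfree : TwoK2Free G)
    (hcf : G.CliqueFree 4) (ht : Pairwise fun i j ↦ G.Adj (t i) (t j))
    (hind : ∀ i j, i ≠ j → G.IsIndepSet (adjAllBut G t i \ {t i} ∪ adjAllBut G t j \ {t j})) :
    G.Colorable 4 := by
  have hE : ∀ i, G.IsIndepSet (adjAllBut G t i \ {t i}) := fun i ↦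
    (isIndepSet_adjAllBut hcf ht i).mono Set.sdiff_subset
  have hunion : G.IsIndepSet (⋃ i, adjAllBut G t i \ {t i}) := by
    intro v hv w hw hne
    obtain ⟨⟨i, hi⟩, ⟨j, hj⟩⟩ := Set.mem_iUnion.1 hv, Set.mem_iUnion.1 hw
    rcases eq_or_ne i j with rfl | hij
    exacts [hE i hi hj hne, hind i j hij (.inl hi) (.inr hj) hne]
  have hsucc : ∀ i : Fin 3, i ≠ i + 1 := by decide
  refine colorable_of_forall_isIndepSet (Fin.cons (⋃ i, adjAllBut G t i \ {t i})
    fun i : Fin 3 ↦ insert (t (i + 1)) (adjOnly G t i ∪ adjNone G t))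
    (Fin.cases hunion fun i ↦ hfree.isIndepSet_insert_adjOnly_union_adjNone ht (hsucc i)) fun v ↦ ?_
  simp only [Fin.exists_fin_succ (n := 3), Fin.cons_zero, Fin.cons_succ]
  rcases mem_adjAllBut_or_adjOnly_or_adjNone hcf ht v with ⟨i, hi⟩ | ⟨i, hi⟩ | hv
  · rcases eq_or_ne v (t i) with rfl | hne
    · exact .inr ⟨i - 1, by simp⟩
    · exact .inl (Set.mem_iUnion.2 ⟨i, hi, hne⟩)
  · exact .inr ⟨i, .inr (.inl hi)⟩
  · exact .inr ⟨0, .inr (.inr hv)⟩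

theorem notMem_adjAllBut_of_mem_adjAllBut {v : V} (hij : i ≠ j) (hv : v ∈ adjAllBut G t i) :
    v ∉ adjAllBut G t j := fun h ↦ (h j).1 ((hv j).2 hij.symm) rfl

theorem notMem_adjAllBut_of_mem_adjOnly {v : V} (hv : v ∈ adjOnly G t k) :
    v ∉ adjAllBut G t j := fun h ↦ by
  obtain ⟨p, q, hp, hq, hpq⟩ := exists_ne_ne_of_fin_three j
  exact hpq (((hv p).1 ((h p).2 hp)).trans ((hv q).1 ((h q).2 hq)).symm)

theorem mem_adjAllBut_self (ht : Pairwise fun i j ↦ G.Adj (t i) (t j)) (i : Fin 3) :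
    t i ∈ adjAllBut G t i := fun _ ↦
  ⟨fun h hji ↦ h.ne (congrArg t hji.symm), fun hji ↦ ht hji.symm⟩

theorem ncard_adjAllBut_add_le_degree [Fintype V] [DecidableRel G.Adj] (hij : i ≠ j)
    (hik : i ≠ k) (hjk : j ≠ k) :
    (adjAllBut G t i).ncard + (adjAllBut G t j).ncard + (adjOnly G t k).ncard ≤
      G.degree (t k) := by
  have hCC : Disjoint (adjAllBut G t i) (adjAllBut G t j) :=
    Set.disjoint_left.2 fun _ ↦ notMem_adjAllBut_of_mem_adjAllBut hij
  have hCD : Disjoint (adjAllBut G t i ∪ adjAllBut G t j) (adjOnly G t k) :=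
    Set.disjoint_right.2 fun _ hv ↦ not_or_intro (notMem_adjAllBut_of_mem_adjOnly hv)
      (notMem_adjAllBut_of_mem_adjOnly hv)
  rw [← Set.ncard_union_eq hCC, ← Set.ncard_union_eq hCD,
    ← SimpleGraph.card_neighborFinset_eq_degree, ← Set.ncard_coe_finset,
    SimpleGraph.coe_neighborFinset]
  refine Set.ncard_le_ncard fun v hv ↦ ?_
  rcases hv with (hv | hv) | hv
  exacts [((hv k).2 hik.symm).symm, ((hv k).2 hjk.symm).symm, ((hv k).2 rfl).symm]

/-- If all three unions carry an edge, the degree of `t k` leaves no room for distinct witnesses,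
and the common ones form a `K₄` with `t k`. -/
theorem TwoK2Free.isIndepSet_or_of_degree_le_five [Fintype V] [DecidableRel G.Adj]
    (hfree : TwoK2Free G) (hcf : G.CliqueFree 4) (ht : Pairwise fun i j ↦ G.Adj (t i) (t j))
    (hdeg : G.degree (t k) ≤ 5) (hij : i ≠ j) (hik : i ≠ k) (hjk : j ≠ k) :
    G.IsIndepSet (adjOnly G t k ∪ adjAllBut G t i) ∨
      G.IsIndepSet (adjOnly G t k ∪ adjAllBut G t j) ∨
      G.IsIndepSet (adjAllBut G t i \ {t i} ∪ adjAllBut G t j \ {t j}) := by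
  classical
  have hC := isIndepSet_adjAllBut hcf ht
  have hD : G.IsIndepSet (adjOnly G t k) :=
    (hfree.isIndepSet_adjOnly_union_adjNone ht k).mono Set.subset_union_left
  have hE := fun i ↦ (hC i).mono (Set.sdiff_subset (t := {t i}))
  rw [isIndepSet_union_iff, isIndepSet_union_iff, isIndepSet_union_iff]
  simp only [hC, hD, hE, true_and]
  by_contra! h
  obtain ⟨⟨d, hd, u, hu, hdu⟩, ⟨d', hd', w, hw, hdw⟩, u', hu', w', hw', huw⟩ := h
  have hu : u ∈ adjAllBut G t i \ {t i} := ⟨hu, fun h ↦ hik ((hd i).1 (h ▸ hdu))⟩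
  have hw : w ∈ adjAllBut G t j \ {t j} := ⟨hw, fun h ↦ hjk ((hd' j).1 (h ▸ hdw))⟩
  have hEi := (Set.ncard_pos (Set.toFinite _)).2 ⟨u, hu⟩
  have hEj := (Set.ncard_pos (Set.toFinite _)).2 ⟨w, hw⟩
  have hDk := (Set.ncard_pos (Set.toFinite _)).2 ⟨d, hd⟩
  have hCi := Set.ncard_sdiff_singleton_add_one (mem_adjAllBut_self ht i) (Set.toFinite _)
  have hCj := Set.ncard_sdiff_singleton_add_one (mem_adjAllBut_self ht j) (Set.toFinite _)
  have hle := ncard_adjAllBut_add_le_degree (G := G) (t := t) hij hik hjk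
  obtain rfl : d' = d := (Set.ncard_le_one (Set.toFinite _)).1 (by lia) d' hd' d hd
  obtain rfl : u' = u := (Set.ncard_le_one (Set.toFinite _)).1 (by lia) u' hu' u hu
  obtain rfl : w' = w := (Set.ncard_le_one (Set.toFinite _)).1 (by lia) w' hw' w hw
  have hK : G.IsNClique 3 {d', u', w'} := SimpleGraph.is3Clique_triple_iff.2 ⟨hdu, hdw, huw⟩
  obtain ⟨x, hx, hkx⟩ := hK.exists_not_adj_of_cliqueFree_succ hcf (t k)
  simp only [mem_insert, mem_singleton] at hx
  rcases hx with rfl | rfl | rfl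
  exacts [hkx ((hd k).2 rfl).symm, hkx ((hu.1 k).2 hik.symm).symm, hkx ((hw.1 k).2 hjk.symm).symm]

theorem TwoK2Free.colorable_four_of_cliqueFree_four [Fintype V] [DecidableRel G.Adj]
    (hfree : TwoK2Free G) (hcf : G.CliqueFree 4) (hΔ : G.maxDegree ≤ 5) : G.Colorable 4 := by
  by_cases h3 : G.CliqueFree 3
  · exact (hfree.colorable_three_of_cliqueFree_three h3).mono (by simp)
  let t := SimpleGraph.topEmbeddingOfNotCliqueFree h3
  have ht : Pairwise fun i j ↦ G.Adj (t i) (t j) := fun i j hij ↦ t.map_adj_iff.2 hij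
  have hor {i j k : Fin 3} (hij : i ≠ j) (hik : i ≠ k) (hjk : j ≠ k) :=
    hfree.isIndepSet_or_of_degree_le_five hcf ht ((G.degree_le_maxDegree (t k)).trans hΔ)
      hij hik hjk
  by_contra hcol
  have hdep : ∀ i k, i ≠ k → ¬ G.IsIndepSet (adjOnly G t k ∪ adjAllBut G t i) :=
    fun i k hik hki ↦ by
      obtain ⟨j, hji, hjk, -⟩ := exists_third_of_ne hik
      rcases hor hjk hji hik.symm with h | h | h
      · exact hcol (hfree.colorable_four_of_isIndepSet_adjOnly_union hcf ht hik hji h hki)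
      · exact hcol (hfree.colorable_four_of_isIndepSet_adjOnly_union hcf ht hik hik.symm h hki)
      · exact hcol (hfree.colorable_four_of_isIndepSet_pair hcf ht hji.symm hik hjk h hki)
  refine hcol (hfree.colorable_four_of_forall_isIndepSet_pair hcf ht fun i j hij ↦ ?_)
  obtain ⟨k, hki, hkj, -⟩ := exists_third_of_ne hij
  exact ((hor hij hki.symm hkj.symm).resolve_left (hdep i k hki.symm)).resolve_left
    (hdep j k hkj.symm)

end Triangle

theorem TwoK2Free.colorable_three_of_maxDegree_le {V : Type*} [Fintype V] {G : SimpleGraph V}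
    [DecidableRel G.Adj] (hfree : TwoK2Free G) (hcf : G.CliqueFree 4) (hΔ : G.maxDegree ≤ 3) :
    G.Colorable 3 := by
  classical
  by_contra hcol
  obtain ⟨s, hs⟩ := exists_isVertexCritical_induce hcol
  have hcf' : (G.induce s).CliqueFree 4 := hcf.comap (SimpleGraph.Embedding.induce s).isContained
  exact hs.1 <| (hfree.induce s).colorable_three_of_cliqueFree_three <|
    hs.cliqueFree_of_maxDegree_le (hfree.induce s) le_rfl hcf' <|
      (SimpleGraph.Copy.induce G s).maxDegree_mono.trans hΔ

theorem TwoK2Free.exists_induce_cliqueFree_of_not_colorable {V : Type*} [Fintype V]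
    {G : SimpleGraph V} [DecidableRel G.Adj] {m : ℕ} (hm : 4 ≤ m) (hfree : TwoK2Free G)
    (hcf : G.CliqueFree (m + 1)) (hΔ : G.maxDegree ≤ m + 1) (hcol : ¬ G.Colorable m) :
    ∃ s : Set V, ¬ (G.induce s).Colorable m ∧ (G.induce s).CliqueFree m := by
  classical
  obtain ⟨s, hs⟩ := exists_isVertexCritical_induce hcol
  exact ⟨s, hs.1, hs.cliqueFree_of_maxDegree_le_succ (hfree.induce s) hm
    (hcf.comap (SimpleGraph.Embedding.induce s).isContained)
    ((SimpleGraph.Copy.induce G s).maxDegree_mono.trans hΔ)⟩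

theorem TwoK2Free.colorable_of_maxDegree_le_succ {m : ℕ} (hm : 4 ≤ m) {V : Type*} [Fintype V]
    {G : SimpleGraph V} [DecidableRel G.Adj] (hfree : TwoK2Free G) (hcf : G.CliqueFree (m + 1))
    (hΔ : G.maxDegree ≤ m + 1) : G.Colorable m := by
  classical
  induction m, hm using Nat.le_induction generalizing V with
  | base =>
    by_contra hcol
    obtain ⟨s, hs, hcfs⟩ :=
      hfree.exists_induce_cliqueFree_of_not_colorable le_rfl hcf hΔ hcol
    exact hs <| (hfree.induce s).colorable_four_of_cliqueFree_four hcfs <|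
      (SimpleGraph.Copy.induce G s).maxDegree_mono.trans hΔ
  | succ m hm ih =>
    by_contra hcol
    obtain ⟨s, hs, hcfs⟩ :=
      hfree.exists_induce_cliqueFree_of_not_colorable (by lia) hcf hΔ hcol
    obtain ⟨I, hI⟩ := (Set.toFinite {I | (G.induce s).IsIndepSet I}).exists_maximal
      ⟨∅, Set.pairwise_empty _⟩
    refine hs (colorable_succ_of_induce_compl hI.prop <| ih ((hfree.induce s).induce _)
      (hcfs.comap (SimpleGraph.Embedding.induce _).isContained) ?_)
    refine SimpleGraph.maxDegree_le_of_forall_degree_le _ _ fun v ↦ Nat.lt_succ_iff.1 ?_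
    exact (degree_induce_compl_lt hI v).trans_le <| (SimpleGraph.degree_le_maxDegree _ _).trans <|
      (SimpleGraph.Copy.induce G s).maxDegree_mono.trans hΔ

theorem twoK2Free_exceptions
    {V : Type*} [Fintype V] (G : SimpleGraph V) [DecidableRel G.Adj]
    (hfree : TwoK2Free G)
    (hχ : (max G.cliqueNum (G.maxDegree - 1) : ℕ) < G.chromaticNumber) :
    (G.maxDegree ≤ 3 ∧ G.cliqueNum = 2 ∧ G.chromaticNumber = 3) ∨
    (G.maxDegree = 4 ∧ G.chromaticNumber = 4 ∧ G.cliqueNum = 3) := by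
  obtain ⟨k, hk⟩ := ENat.ne_top_iff_exists.1
    (SimpleGraph.chromaticNumber_ne_top_iff_exists.2 ⟨_, G.colorable_of_fintype⟩)
  rw [← hk, Nat.cast_lt, max_lt_iff] at hχ
  obtain ⟨n, rfl⟩ := Nat.exists_eq_add_one.2 (pos_of_gt hχ.1)
  have hncol : ¬ G.Colorable n :=
    (SimpleGraph.chromaticNumber_eq_iff_colorable_not_colorable.1 (mod_cast hk.symm)).2
  have hcf := cliqueFree_succ_iff_cliqueNum_le.2 (Nat.lt_succ_iff.1 hχ.1)
  have hn2 : 1 < n := by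
    by_contra! hn
    exact hncol (colorable_of_cliqueFree_of_le_one hn hcf)
  have hn4 : n < 4 := by
    by_contra! hn
    exact hncol (hfree.colorable_of_maxDegree_le_succ hn hcf (by lia))
  interval_cases n
  · have : ¬ G.cliqueNum ≤ 1 := fun h ↦ hncol <| (colorable_of_cliqueFree_of_le_one le_rfl
      (cliqueFree_succ_iff_cliqueNum_le.2 h)).mono one_le_two
    exact .inl ⟨by lia, by lia, hk.symm⟩
  · have : ¬ G.cliqueNum ≤ 2 := fun h ↦ hncol <|
      hfree.colorable_three_of_cliqueFree_three (cliqueFree_succ_iff_cliqueNum_le.2 h)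
    have : ¬ G.maxDegree ≤ 3 := fun h ↦ hncol (hfree.colorable_three_of_maxDegree_le hcf h)
    exact .inr ⟨by lia, hk.symm, by lia⟩
end

section
/- Let G be a finite simple 2K2-free triangle-free graph (ω(G) ≤ 2) with maximum degree Δ(G) ≥ 4. Then χ(G) ≤ Δ(G) − 1; in particular, if Δ(G) = 4 then G is 3-colorable. -/
/-!
Fix an edge `ab`. The neighbourhoods of `a` and of `b` are independent because there is no
triangle, and the vertices outside both are independent because an edge among them would form an
induced `2K2` with `ab`. These three sets cover the graph, so `χ ≤ 3 ≤ Δ - 1`.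
-/

section

variable {V : Type*} {G : SimpleGraph V}

theorem TwoK2Free.isIndepSet_compl_neighborSet_union (hG : TwoK2Free G) {a b : V}
    (hab : G.Adj a b) : G.IsIndepSet (G.neighborSet a ∪ G.neighborSet b)ᶜ := by
  intro v hv w hw _ hvw
  simp only [Set.mem_compl_iff, Set.mem_union, SimpleGraph.mem_neighborSet, not_or] at hv hw
  obtain ⟨hav, hbv⟩ := hv
  obtain ⟨haw, hbw⟩ := hw
  have a_ne {x : V} (hbx : ¬G.Adj b x) : a ≠ x :=
    G.ne_of_adj_of_not_adj hab fun hxb ↦ hbx hxb.symm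
  have b_ne {x : V} (hax : ¬G.Adj a x) : b ≠ x :=
    G.ne_of_adj_of_not_adj hab.symm fun hxa ↦ hax hxa.symm
  exact hG ⟨a, b, v, w, hab.ne, a_ne hbv, a_ne hbw, b_ne hav, b_ne haw, hvw.ne,
    hab, hvw, hav, haw, hbv, hbw⟩

theorem nonempty_coloring_of_isIndepSet_iUnion_eq_univ {ι : Type*} {s : ι → Set V}
    (hs : ∀ i, G.IsIndepSet (s i)) (hcover : ⋃ i, s i = Set.univ) : Nonempty (G.Coloring ι) := by
  choose color hcolor using Set.iUnion_eq_univ_iff.mp hcover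
  refine ⟨SimpleGraph.Coloring.mk color fun {v w} hvw heq ↦ ?_⟩
  exact hs (color v) (hcolor v) (heq ▸ hcolor w) hvw.ne hvw

theorem cliqueFree_of_cliqueNum_lt [Finite V] {n : ℕ} (h : G.cliqueNum < n) : G.CliqueFree n :=
  fun _ hs ↦ h.not_ge (hs.card_eq ▸ hs.isClique.card_le_cliqueNum)

end

theorem twoK2Free_triangleFree_chromatic_le_maxDegree_sub_one_general
    {V : Type*} {G : SimpleGraph V} (hfree : TwoK2Free G) (htri : G.CliqueFree 3) :
    G.Colorable 3 := by
  obtain rfl | hG := eq_or_ne G ⊥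
  · exact (SimpleGraph.colorable_one_iff.mpr rfl).mono (by norm_num)
  obtain ⟨a, b, hab⟩ := SimpleGraph.ne_bot_iff_exists_adj.mp hG
  have hN := G.isIndepSet_neighborSet_of_triangleFree htri
  let s : Fin 3 → Set V :=
    ![G.neighborSet a, G.neighborSet b, (G.neighborSet a ∪ G.neighborSet b)ᶜ]
  have hs : ∀ i, G.IsIndepSet (s i) :=
    Fin.forall_fin_succ.mpr ⟨hN a, Fin.forall_fin_two.mpr
      ⟨hN b, hfree.isIndepSet_compl_neighborSet_union hab⟩⟩
  have hcover : ⋃ i, s i = Set.univ := by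
    refine Set.iUnion_eq_univ_iff.mpr fun v ↦ ?_
    by_cases hv : v ∈ G.neighborSet a ∪ G.neighborSet b
    · exact hv.elim (fun hav ↦ ⟨0, hav⟩) fun hbv ↦ ⟨1, hbv⟩
    · exact ⟨2, hv⟩
  exact nonempty_coloring_of_isIndepSet_iUnion_eq_univ hs hcover

theorem twoK2Free_triangleFree_chromatic_le_maxDegree_sub_one
    {V : Type*} [Fintype V] (G : SimpleGraph V) [DecidableRel G.Adj]
    (hfree : TwoK2Free G) (hω : G.cliqueNum ≤ 2) (hΔ : 4 ≤ G.maxDegree) :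
    G.chromaticNumber ≤ (G.maxDegree - 1 : ℕ) ∧
      (G.maxDegree = 4 → G.Colorable 3) := by
  have h3 := twoK2Free_triangleFree_chromatic_le_maxDegree_sub_one_general hfree
    (cliqueFree_of_cliqueNum_lt (Nat.lt_succ_of_le hω))
  exact ⟨(h3.mono (Nat.le_sub_one_of_lt hΔ)).chromaticNumber_le, fun _ ↦ h3⟩
end
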